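/- Let P be the R-measure. Then lim_{n→∞} (2·log n)/(−log V_n(P)) = 1; that is, the quantization dimension of P exists and equals one. -/

import Mathlib

open MeasureTheory ENNReal

noncomputable section

abbrev E2 : Type := EuclideanSpace ℝ (Fin 2)

/-- The point (a, b) of the Euclidean plane. -/
def pt (a b : ℝ) : E2 := (WithLp.equiv 2 (Fin 2 → ℝ)).symm ![a, b]

/-- S₁(x) = x/3. -/
def S1 : E2 → E2 := fun x => (3 : ℝ)⁻¹ • x

/-- S₂(x) = x/3 + (2/3, 0). -/
def S2 : E2 → E2 := fun x => (3 : ℝ)⁻¹ • x + pt (2/3) 0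

/-- S₃(x) = x/3 + (1/3, √3/3). -/
def S3 : E2 → E2 := fun x => (3 : ℝ)⁻¹ • x + pt (1/3) (Real.sqrt 3 / 3)

def Smap : Fin 3 → E2 → E2 := ![S1, S2, S3]

/-- For a word ω = ω₁⋯ω_k ∈ {1,2,3}^k, the composition S_ω = S_{ω₁} ∘ ⋯ ∘ S_{ω_k}. -/
def Sword {k : ℕ} (ω : Fin k → Fin 3) : E2 → E2 :=
  fun x => (List.ofFn fun i => Smap (ω i)).foldr (fun g y => g y) x

/-- The closed triangle with vertices (0,0), (1,0), (1/2, √3/2). -/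
def Tri : Set E2 := convexHull ℝ {pt 0 0, pt 1 0, pt (1/2) (Real.sqrt 3 / 2)}

/-- The distortion error ∫ min_{a ∈ α} ‖x − a‖² dμ of a set α of points. -/
def err (μ : Measure E2) (α : Set E2) : ℝ≥0∞ :=
  ∫⁻ x, ⨅ a ∈ α, ENNReal.ofReal (‖x - a‖ ^ 2) ∂μ

/-- The n-th quantization error V_n(μ). -/
def quantErr (μ : Measure E2) (n : ℕ) : ℝ≥0∞ :=
  ⨅ (α : Set E2) (_ : α.Finite ∧ α.ncard ≤ n), err μ α

/-- α is an optimal set of n-means for μ. -/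
def IsOptimal (μ : Measure E2) (n : ℕ) (α : Set E2) : Prop :=
  α.Finite ∧ α.ncard ≤ n ∧ err μ α = quantErr μ n

/-!
Let `μ` be the average of its images under `N ≥ 2` similarities of ratio `ρ < 1` that carry a closed
bounded set `K` into pairwise separated subsets of `K`. Contraction forces `μ` to live on `K`.
Applying all the maps to `n` points gives `N * n` points whose error of order `r` is at most `ρ ^ r`
times the error of the original ones, so `V (N ^ k) ≤ C * ρ ^ (r * k)`. Conversely, a set of
diameter less than the gap between the pieces meets only one of them, so a set of diameter about
`ρ ^ k` has mass at most `N ^ (-k)`; hence `N ^ (k + 1)` balls of radius about `ρ ^ (k + 2)` miss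
half of the mass, and `V (N ^ (k + 1)) ≥ c * ρ ^ (r * k)`. The quantization dimension of
order `r` is therefore `log N / -log ρ`, and the R-measure has `N = 3` and `ρ = 1 / 3`.
-/

section LogAsymptotics

open Filter Topology

lemma tendsto_log_div_of_mul_pow_le {α : Type*} {l : Filter α} {k : α → ℕ} {v : α → ℝ}
    {c₁ c₂ q : ℝ} (hk : Tendsto k l atTop) (hc₁ : 0 < c₁) (hq : 0 < q)
    (hlower : ∀ᶠ a in l, c₁ * q ^ k a ≤ v a) (hupper : ∀ᶠ a in l, v a ≤ c₂ * q ^ k a) :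
    Tendsto (fun a => Real.log (v a) / k a) l (𝓝 (Real.log q)) := by
  have hlim (c : ℝ) : Tendsto (fun a => Real.log c / k a + Real.log q) l (𝓝 (Real.log q)) := by
    simpa using ((tendsto_natCast_atTop_atTop.comp hk).const_div_atTop (Real.log c)).add_const
      (Real.log q)
  have hlog (c : ℝ) (hc : 0 < c) (a : α) (ha : 0 < k a) :
      Real.log c / k a + Real.log q = Real.log (c * q ^ k a) / k a := by
    rw [Real.log_mul hc.ne' (pow_pos hq _).ne', Real.log_pow]
    field_simp
  refine tendsto_of_tendsto_of_tendsto_of_le_of_le' (hlim c₁) (hlim c₂) ?_ ?_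
  · filter_upwards [hlower, hk.eventually_gt_atTop 0] with a hva ha
    rw [hlog c₁ hc₁ a ha]
    gcongr
  · filter_upwards [hlower, hupper, hk.eventually_gt_atTop 0] with a hva hva' ha
    have hv : 0 < v a := (mul_pos hc₁ (pow_pos hq _)).trans_le hva
    have hc₂ : 0 < c₂ := pos_of_mul_pos_left (hv.trans_le hva') (pow_pos hq _).le
    rw [hlog c₂ hc₂ a ha]
    gcongr

lemma tendsto_natLog_atTop {b : ℕ} (hb : 1 < b) : Tendsto (Nat.log b) atTop atTop :=
  tendsto_atTop_atTop_of_monotone Nat.log_monotone fun k => ⟨b ^ k, (Nat.log_pow hb k).ge⟩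

lemma tendsto_log_div_natLog {b : ℕ} (hb : 1 < b) :
    Tendsto (fun n : ℕ => Real.log n / Nat.log b n) atTop (𝓝 (Real.log b)) := by
  refine tendsto_log_div_of_mul_pow_le (c₁ := 1) (c₂ := b) (tendsto_natLog_atTop hb) one_pos
    (by positivity) ?_ (.of_forall fun n => ?_)
  · filter_upwards [eventually_ne_atTop 0] with n hn
    rw [one_mul]
    exact_mod_cast Nat.pow_log_le_self b hn
  · rw [← pow_succ']
    exact_mod_cast (Nat.lt_pow_succ_log_self hb n).le

end LogAsymptotics

lemma natCast_mul_inv_pow_succ_le_inv {N n m : ℕ} (hn : n ≤ N ^ m) :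
    n * (N : ℝ≥0∞)⁻¹ ^ (m + 1) ≤ (N : ℝ≥0∞)⁻¹ :=
  calc n * (N : ℝ≥0∞)⁻¹ ^ (m + 1) ≤ N ^ m * (N : ℝ≥0∞)⁻¹ ^ (m + 1) := by
        gcongr
        exact mod_cast hn
    _ = (N * (N : ℝ≥0∞)⁻¹) ^ m * (N : ℝ≥0∞)⁻¹ := by ring
    _ ≤ (N : ℝ≥0∞)⁻¹ := mul_le_of_le_one_left' (pow_le_one' (ENNReal.mul_inv_le_one _) _)

section InfEDist

open Metric
open scoped NNReal

lemma infEDist_image_le_of_lipschitzWith {X Y : Type*} [PseudoEMetricSpace X]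
    [PseudoEMetricSpace Y] {K : ℝ≥0} {f : X → Y} (hf : LipschitzWith K f) (hK : K ≠ 0)
    (x : X) (s : Set X) : infEDist (f x) (f '' s) ≤ K * infEDist x s := by
  simp only [infEDist, iInf_image, ENNReal.mul_iInf_of_ne (ENNReal.coe_ne_zero.2 hK)
    ENNReal.coe_ne_top]
  exact iInf₂_mono fun y _ => hf x y

end InfEDist

/-- `μ` is the self-similar measure of the family of maps `f` with equal weights: the average of
its images under the maps `f i`. -/
def IsSelfSimilar {ι X : Type*} [Fintype ι] [MeasurableSpace X] (f : ι → X → X)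
    (μ : Measure X) : Prop :=
  μ = (Fintype.card ι : ℝ≥0∞)⁻¹ • ∑ i, μ.map (f i)

namespace IsSelfSimilar

open Filter Metric Set Topology
open scoped NNReal

variable {ι X : Type*} [Fintype ι] {f : ι → X → X}

section Measurable

variable [MeasurableSpace X] {μ : Measure X}

lemma measure_eq (hμ : IsSelfSimilar f μ) (hf : ∀ i, Measurable (f i)) {s : Set X}
    (hs : MeasurableSet s) :
    μ s = (Fintype.card ι : ℝ≥0∞)⁻¹ * ∑ i, μ (f i ⁻¹' s) := by
  conv_lhs => rw [hμ]
  simp only [Measure.smul_apply, Measure.finsetSum_apply, Measure.map_apply (hf _) hs, smul_eq_mul]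

lemma lintegral_le (hμ : IsSelfSimilar f μ) (hf : ∀ i, Measurable (f i)) {g h : X → ℝ≥0∞}
    (hg : Measurable g) (hgh : ∀ i x, g (f i x) ≤ h x) : ∫⁻ x, g x ∂μ ≤ ∫⁻ x, h x ∂μ :=
  calc ∫⁻ x, g x ∂μ = (Fintype.card ι : ℝ≥0∞)⁻¹ * ∑ i, ∫⁻ x, g (f i x) ∂μ := by
        conv_lhs => rw [hμ]
        simp only [lintegral_smul_measure, lintegral_finsetSum_measure, lintegral_map hg (hf _),
          smul_eq_mul]
    _ ≤ (Fintype.card ι : ℝ≥0∞)⁻¹ * ∑ _i : ι, ∫⁻ x, h x ∂μ := by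
        gcongr with i
        exact hgh i _
    _ = (Fintype.card ι : ℝ≥0∞)⁻¹ * Fintype.card ι * ∫⁻ x, h x ∂μ := by
        rw [Finset.sum_const, nsmul_eq_mul, Finset.card_univ, mul_assoc]
    _ ≤ ∫⁻ x, h x ∂μ := mul_le_of_le_one_left' (ENNReal.inv_mul_le_one _)

end Measurable

section Concentration

variable [MeasurableSpace X] {μ : Measure X} {ρ : ℝ≥0} {K : Set X}

-- Truncating the distance at `1` makes dominated convergence applicable as `k → ∞`.
lemma lintegral_min_infEDist_le [PseudoEMetricSpace X] [BorelSpace X] (hμ : IsSelfSimilar f μ)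
    (hf : ∀ i, LipschitzWith ρ (f i)) (hρ : ρ ≠ 0) (hK : ∀ i, MapsTo (f i) K K) (k : ℕ) :
    ∫⁻ x, min 1 (infEDist x K) ∂μ ≤ ∫⁻ x, min 1 ((ρ : ℝ≥0∞) ^ k * infEDist x K) ∂μ := by
  induction k with
  | zero => simp
  | succ k ih =>
    refine ih.trans (hμ.lintegral_le (fun i => (hf i).continuous.measurable) (by fun_prop)
      fun i x => ?_)
    rw [pow_succ, mul_assoc]
    gcongr
    exact (infEDist_anti (hK i).image_subset).trans
      (infEDist_image_le_of_lipschitzWith (hf i) hρ x K)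

lemma ae_mem_of_mapsTo [PseudoMetricSpace X] [BorelSpace X] [IsFiniteMeasure μ]
    (hμ : IsSelfSimilar f μ) (hf : ∀ i, LipschitzWith ρ (f i)) (hρ₀ : ρ ≠ 0) (hρ₁ : ρ < 1)
    (hKc : IsClosed K) (hKn : K.Nonempty) (hK : ∀ i, MapsTo (f i) K K) : ∀ᵐ x ∂μ, x ∈ K := by
  have hlim : Tendsto (fun k : ℕ => ∫⁻ x, min 1 ((ρ : ℝ≥0∞) ^ k * infEDist x K) ∂μ) atTop
      (𝓝 (∫⁻ _, 0 ∂μ)) := by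
    refine tendsto_lintegral_of_dominated_convergence 1 (fun k => by fun_prop)
      (fun k => .of_forall fun x => min_le_left _ _) (by simp) (.of_forall fun x => ?_)
    have hpow : Tendsto (fun k : ℕ => (ρ : ℝ≥0∞) ^ k * infEDist x K) atTop (𝓝 0) := by
      simpa using ENNReal.Tendsto.mul_const
        (ENNReal.tendsto_pow_atTop_nhds_zero_of_lt_one (ENNReal.coe_lt_one_iff.2 hρ₁))
        (.inr (infEDist_ne_top hKn))
    simpa using tendsto_const_nhds.min hpow
  have hzero : ∫⁻ x, min 1 (infEDist x K) ∂μ = 0 :=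
    nonpos_iff_eq_zero.1 <| by
      simpa using ge_of_tendsto' hlim (hμ.lintegral_min_infEDist_le hf hρ₀ hK)
  filter_upwards [(lintegral_eq_zero_iff (by fun_prop)).1 hzero] with x hx
  refine (mem_iff_infEDist_zero_of_closed hKc).2 ?_
  simpa using hx

end Concentration

section SmallSets

variable [PseudoEMetricSpace X] [MeasurableSpace X] {μ : Measure X} {K s : Set X} {δ : ℝ≥0∞}

lemma measure_le_inv_card_mul (hμ : IsSelfSimilar f μ) (hf : ∀ i, Measurable (f i))
    (hK : ∀ᵐ x ∂μ, x ∈ K)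
    (hsep : Pairwise fun i j => ∀ x ∈ K, ∀ y ∈ K, δ < edist (f i x) (f j y))
    (hs : MeasurableSet s) (hsδ : ediam s ≤ δ) {M : ℝ≥0∞} (hM : ∀ i, μ (f i ⁻¹' s) ≤ M) :
    μ s ≤ (Fintype.card ι : ℝ≥0∞)⁻¹ * M := by
  have exists_mem {i : ι} (hi : μ (f i ⁻¹' s) ≠ 0) : ∃ x ∈ K, f i x ∈ s := by
    obtain ⟨x, hx, hxK⟩ := ((frequently_ae_mem_iff.2 hi).and_eventually hK).exists
    exact ⟨x, hxK, hx⟩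
  have unique {i j : ι} (hi : μ (f i ⁻¹' s) ≠ 0) (hj : μ (f j ⁻¹' s) ≠ 0) : i = j := by
    by_contra hij
    obtain ⟨x, hxK, hx⟩ := exists_mem hi
    obtain ⟨y, hyK, hy⟩ := exists_mem hj
    exact (hsep hij x hxK y hyK).not_ge ((edist_le_ediam_of_mem hx hy).trans hsδ)
  rw [hμ.measure_eq hf hs]
  gcongr
  by_cases! h : ∃ i, μ (f i ⁻¹' s) ≠ 0
  · obtain ⟨i, hi⟩ := h
    rw [Fintype.sum_eq_single i fun j hji => by_contra fun hj => hji (unique hj hi)]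
    exact hM i
  · simp [h]

lemma measure_le_inv_card_pow [IsProbabilityMeasure μ] (hμ : IsSelfSimilar f μ)
    (hf : ∀ i, Measurable (f i)) {ρ : ℝ≥0} (hanti : ∀ i, AntilipschitzWith ρ⁻¹ (f i))
    (hρ₀ : ρ ≠ 0) (hρ₁ : ρ ≤ 1) (hK : ∀ᵐ x ∂μ, x ∈ K)
    (hsep : Pairwise fun i j => ∀ x ∈ K, ∀ y ∈ K, δ < edist (f i x) (f j y)) (k : ℕ)
    (hs : MeasurableSet s) (hsk : ediam s ≤ ρ ^ k * δ) :
    μ s ≤ (Fintype.card ι : ℝ≥0∞)⁻¹ ^ k := by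
  induction k generalizing s with
  | zero => simpa using prob_le_one
  | succ k ih =>
    rw [pow_succ']
    refine hμ.measure_le_inv_card_mul hf hK hsep hs
      (hsk.trans (mul_le_of_le_one_left' (pow_le_one' (mod_cast hρ₁) _))) fun i => ih (hf i hs) ?_
    calc ediam (f i ⁻¹' s) ≤ (ρ⁻¹ : ℝ≥0) * ediam s := (hanti i).ediam_preimage_le s
      _ ≤ (ρ⁻¹ : ℝ≥0) * (ρ ^ (k + 1) * δ) := by gcongr
      _ = ((ρ⁻¹ * ρ : ℝ≥0) : ℝ≥0∞) * (ρ ^ k * δ) := by push_cast; ring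
      _ = ρ ^ k * δ := by rw [inv_mul_cancel₀ hρ₀, ENNReal.coe_one, one_mul]

end SmallSets

end IsSelfSimilar

/-- The `n`-th quantization error of order `r` of a measure on a (pseudo-e)metric space: the
infimum of `∫ d(x, α) ^ r dμ` over the sets `α` of at most `n` points. It is `V_n` for `r = 2` in
the Euclidean plane; the distance to the empty set is `∞`. -/
def quantizationError {X : Type*} [PseudoEMetricSpace X] [MeasurableSpace X] (r : ℝ)
    (μ : Measure X) (n : ℕ) : ℝ≥0∞ :=
  ⨅ (α : Set X) (_ : α.Finite ∧ α.ncard ≤ n), ∫⁻ x, Metric.infEDist x α ^ r ∂μ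

lemma quantErr_eq_quantizationError (μ : Measure E2) (n : ℕ) :
    quantErr μ n = quantizationError 2 μ n := by
  have hdist (x a : E2) : ENNReal.ofReal (‖x - a‖ ^ 2) = edist x a ^ (2 : ℝ) := by
    rw [edist_dist, dist_eq_norm, ENNReal.ofReal_pow (norm_nonneg _), ENNReal.rpow_two]
  have hinf (x : E2) (α : Set E2) :
      Metric.infEDist x α ^ (2 : ℝ) = ⨅ a ∈ α, edist x a ^ (2 : ℝ) := by
    simp only [Metric.infEDist, ← ENNReal.orderIsoRpow_apply 2 two_pos, OrderIso.map_iInf]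
  simp only [quantErr, err, quantizationError, hdist, hinf]

section QuantizationError

open Metric Set

variable {X : Type*} [PseudoEMetricSpace X] [MeasurableSpace X] {μ : Measure X} {r : ℝ}

lemma quantizationError_antitone : Antitone (quantizationError r μ) :=
  fun _ _ hmn => le_iInf₂ fun α hα => iInf₂_le α ⟨hα.1, hα.2.trans hmn⟩

lemma quantizationError_one_le [IsProbabilityMeasure μ] (hr : 0 ≤ r) {K : Set X}
    (hKn : K.Nonempty) (hK : ∀ᵐ x ∂μ, x ∈ K) : quantizationError r μ 1 ≤ ediam K ^ r := by
  obtain ⟨c, hc⟩ := hKn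
  calc quantizationError r μ 1 ≤ ∫⁻ x, infEDist x {c} ^ r ∂μ :=
        iInf₂_le {c} ⟨finite_singleton c, (ncard_singleton c).le⟩
    _ ≤ ∫⁻ _, ediam K ^ r ∂μ := lintegral_mono_ae <| hK.mono fun x hx => by
        rw [infEDist_singleton]
        gcongr
        exact edist_le_ediam_of_mem hx hc
    _ = ediam K ^ r := by simp

-- At most `n * c` of the mass lies within `t` of a given set of `n` points.
lemma rpow_mul_one_sub_le_quantizationError [OpensMeasurableSpace X] [IsProbabilityMeasure μ]
    (hr : 0 ≤ r) {t c : ℝ≥0∞} (hball : ∀ a, μ (eball a t) ≤ c) (n : ℕ) :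
    t ^ r * (1 - n * c) ≤ quantizationError r μ n := by
  refine le_iInf₂ fun α ⟨hα, hαn⟩ => ?_
  have hmeas : MeasurableSet {x | infEDist x α < t} := measurableSet_lt (by fun_prop) (by fun_prop)
  have hnear : μ {x | infEDist x α < t} ≤ n * c :=
    calc μ {x | infEDist x α < t} ≤ μ (⋃ a ∈ hα.toFinset, eball a t) := by
          refine measure_mono fun x hx => ?_
          obtain ⟨a, ha, hxa⟩ := infEDist_lt_iff.1 hx
          exact mem_biUnion (hα.mem_toFinset.2 ha) hxa
      _ ≤ ∑ _a ∈ hα.toFinset, c :=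
          (measure_biUnion_finset_le _ _).trans (Finset.sum_le_sum fun _ _ => hball _)
      _ ≤ n * c := by
          rw [Finset.sum_const, nsmul_eq_mul, ← ncard_eq_toFinset_card α hα]
          gcongr
  calc t ^ r * (1 - n * c) ≤ t ^ r * μ {x | infEDist x α < t}ᶜ := by
        rw [prob_compl_eq_one_sub hmeas]
        gcongr
    _ ≤ t ^ r * μ {x | t ^ r ≤ infEDist x α ^ r} := by
        gcongr
        exact fun x hx => ENNReal.rpow_le_rpow (not_lt.1 hx) hr
    _ ≤ ∫⁻ x, infEDist x α ^ r ∂μ := mul_meas_ge_le_lintegral (by fun_prop) _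

end QuantizationError

namespace IsSelfSimilar

open Filter Metric Set Topology
open scoped NNReal

variable {ι X : Type*} [Fintype ι] {f : ι → X → X} [MeasurableSpace X] {μ : Measure X}
  {K : Set X} {ρ : ℝ≥0} {r : ℝ}

section Upper

variable [PseudoEMetricSpace X] [BorelSpace X]

lemma quantizationError_card_mul_le (hμ : IsSelfSimilar f μ) (hf : ∀ i, LipschitzWith ρ (f i))
    (hρ : ρ ≠ 0) (hr : 0 ≤ r) (n : ℕ) :
    quantizationError r μ (Fintype.card ι * n) ≤ ρ ^ r * quantizationError r μ n := by
  have hρr : (ρ : ℝ≥0∞) ^ r ≠ 0 := by simp [ENNReal.rpow_eq_zero_iff, hρ]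
  have hρr' : (ρ : ℝ≥0∞) ^ r ≠ ∞ := ENNReal.rpow_ne_top_of_nonneg hr ENNReal.coe_ne_top
  simp only [quantizationError, ENNReal.mul_iInf_of_ne hρr hρr']
  refine le_iInf₂ fun α ⟨hα, hαn⟩ => ?_
  have hcard : (⋃ i, f i '' α).ncard ≤ Fintype.card ι * n :=
    calc (⋃ i, f i '' α).ncard = (⋃ i ∈ Finset.univ, f i '' α).ncard := by simp
      _ ≤ ∑ i, (f i '' α).ncard := Finset.set_ncard_biUnion_le _ _
      _ ≤ ∑ _i : ι, n := Finset.sum_le_sum fun i _ => (ncard_image_le hα).trans hαn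
      _ = Fintype.card ι * n := by simp
  refine (iInf₂_le (⋃ i, f i '' α) ⟨finite_iUnion fun i => hα.image _, hcard⟩).trans ?_
  rw [← lintegral_const_mul _ (by fun_prop)]
  refine hμ.lintegral_le (fun i => (hf i).continuous.measurable) (by fun_prop) fun i x => ?_
  rw [← ENNReal.mul_rpow_of_nonneg _ _ hr]
  gcongr
  exact (infEDist_anti (subset_iUnion _ i)).trans (infEDist_image_le_of_lipschitzWith (hf i) hρ x α)

lemma quantizationError_card_pow_le [IsProbabilityMeasure μ] (hμ : IsSelfSimilar f μ)
    (hf : ∀ i, LipschitzWith ρ (f i)) (hρ : ρ ≠ 0) (hr : 0 ≤ r) (hKn : K.Nonempty)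
    (hK : ∀ᵐ x ∂μ, x ∈ K) (k : ℕ) :
    quantizationError r μ (Fintype.card ι ^ k) ≤ ediam K ^ r * (ρ ^ r) ^ k := by
  induction k with
  | zero => simpa using quantizationError_one_le hr hKn hK
  | succ k ih =>
    calc quantizationError r μ (Fintype.card ι ^ (k + 1))
        ≤ ρ ^ r * quantizationError r μ (Fintype.card ι ^ k) := by
          rw [pow_succ']
          exact hμ.quantizationError_card_mul_le hf hρ hr _
      _ ≤ ρ ^ r * (ediam K ^ r * (ρ ^ r) ^ k) := by gcongr
      _ = ediam K ^ r * (ρ ^ r) ^ (k + 1) := by ring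

end Upper

-- Balls of radius `ρ ^ (k + 2) * δ / 2` have mass at most `card ι ^ (-(k + 2))`, so `n` of them
-- miss at least half of the mass.
lemma le_quantizationError [PseudoEMetricSpace X] [OpensMeasurableSpace X] [Nontrivial ι]
    [IsProbabilityMeasure μ] (hμ : IsSelfSimilar f μ) (hf : ∀ i, Measurable (f i))
    (hanti : ∀ i, AntilipschitzWith ρ⁻¹ (f i)) (hρ₀ : ρ ≠ 0) (hρ₁ : ρ ≤ 1) (hr : 0 ≤ r)
    (hK : ∀ᵐ x ∂μ, x ∈ K) {δ : ℝ≥0∞}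
    (hsep : Pairwise fun i j => ∀ x ∈ K, ∀ y ∈ K, δ < edist (f i x) (f j y)) {k n : ℕ}
    (hn : n ≤ Fintype.card ι ^ (k + 1)) :
    (ρ ^ 2 * (δ / 2)) ^ r * 2⁻¹ * (ρ ^ r) ^ k ≤ quantizationError r μ n := by
  set N := Fintype.card ι
  have hball (a : X) : μ (eball a (ρ ^ (k + 2) * (δ / 2))) ≤ (N : ℝ≥0∞)⁻¹ ^ (k + 2) := by
    refine hμ.measure_le_inv_card_pow hf hanti hρ₀ hρ₁ hK hsep _ isOpen_eball.measurableSet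
      (ediam_eball_le.trans_eq ?_)
    rw [mul_left_comm, ENNReal.mul_div_cancel two_ne_zero ENNReal.ofNat_ne_top]
  have hmass : n * (N : ℝ≥0∞)⁻¹ ^ (k + 2) ≤ 2⁻¹ :=
    (natCast_mul_inv_pow_succ_le_inv hn).trans <| by
      gcongr
      exact mod_cast Fintype.one_lt_card (α := ι)
  calc (ρ ^ 2 * (δ / 2)) ^ r * 2⁻¹ * (ρ ^ r) ^ k = (ρ ^ (k + 2) * (δ / 2)) ^ r * 2⁻¹ := by
        have hpow : ((ρ : ℝ≥0∞) ^ r) ^ k = (ρ ^ k) ^ r := by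
          simp only [← ENNReal.rpow_natCast, ← ENNReal.rpow_mul, mul_comm]
        rw [hpow, mul_right_comm, ← ENNReal.mul_rpow_of_nonneg _ _ hr]
        ring_nf
    _ ≤ (ρ ^ (k + 2) * (δ / 2)) ^ r * (1 - n * (N : ℝ≥0∞)⁻¹ ^ (k + 2)) := by
        rw [← ENNReal.one_sub_inv_two]
        gcongr
    _ ≤ quantizationError r μ n := rpow_mul_one_sub_le_quantizationError hr hball n

lemma exists_mul_pow_natLog_le_toReal [PseudoEMetricSpace X] [BorelSpace X] [Nontrivial ι]
    [IsProbabilityMeasure μ] (hμ : IsSelfSimilar f μ) (hf : ∀ i, LipschitzWith ρ (f i))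
    (hanti : ∀ i, AntilipschitzWith ρ⁻¹ (f i)) (hρ₀ : ρ ≠ 0) (hρ₁ : ρ ≤ 1) (hr : 0 ≤ r)
    (hKn : K.Nonempty) (hKd : ediam K ≠ ∞) (hK : ∀ᵐ x ∂μ, x ∈ K) {δ : ℝ≥0} (hδ : δ ≠ 0)
    (hsep : Pairwise fun i j => ∀ x ∈ K, ∀ y ∈ K, δ < edist (f i x) (f j y)) :
    ∃ c₁ c₂ : ℝ, 0 < c₁ ∧ ∀ n : ℕ, n ≠ 0 →
      c₁ * ((ρ : ℝ) ^ r) ^ Nat.log (Fintype.card ι) n ≤ (quantizationError r μ n).toReal ∧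
      (quantizationError r μ n).toReal ≤ c₂ * ((ρ : ℝ) ^ r) ^ Nat.log (Fintype.card ι) n := by
  set C₁ : ℝ≥0∞ := (ρ ^ 2 * (δ / 2)) ^ r * 2⁻¹
  set C₂ : ℝ≥0∞ := ediam K ^ r
  have hcard : 1 < Fintype.card ι := Fintype.one_lt_card
  have toReal_mul_pow (C : ℝ≥0∞) (k : ℕ) :
      (C * ((ρ : ℝ≥0∞) ^ r) ^ k).toReal = C.toReal * ((ρ : ℝ) ^ r) ^ k := by
    simp [ENNReal.toReal_mul, ENNReal.toReal_pow, ← ENNReal.toReal_rpow]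
  have hC₁ : 0 < C₁.toReal := by
    have hbase : (ρ : ℝ≥0∞) ^ 2 * (δ / 2) ≠ 0 := by simp [hρ₀, hδ]
    refine ENNReal.toReal_pos (mul_ne_zero ?_ (by simp)) (by finiteness)
    exact (ENNReal.rpow_pos hbase.bot_lt (by finiteness)).ne'
  refine ⟨C₁.toReal, C₂.toReal, hC₁, fun n hn => ?_⟩
  have hlower : C₁ * (ρ ^ r) ^ Nat.log (Fintype.card ι) n ≤ quantizationError r μ n :=
    hμ.le_quantizationError (fun i => (hf i).continuous.measurable) hanti hρ₀ hρ₁ hr hK hsep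
      (Nat.lt_pow_succ_log_self hcard n).le
  have hupper : quantizationError r μ n ≤ C₂ * (ρ ^ r) ^ Nat.log (Fintype.card ι) n :=
    (quantizationError_antitone (Nat.pow_log_le_self _ hn)).trans
      (hμ.quantizationError_card_pow_le hf hρ₀ hr hKn hK _)
  have hfinite : C₂ * (ρ ^ r) ^ Nat.log (Fintype.card ι) n ≠ ∞ := by finiteness
  rw [← toReal_mul_pow, ← toReal_mul_pow]
  exact ⟨ENNReal.toReal_mono (ne_top_of_le_ne_top hfinite hupper) hlower,
    ENNReal.toReal_mono hfinite hupper⟩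

end IsSelfSimilar

open Filter Metric Set Topology NNReal in
theorem stmt_18_general {ι X : Type*} [Fintype ι] [Nontrivial ι] [PseudoMetricSpace X]
    [MeasurableSpace X] [BorelSpace X] {f : ι → X → X} {μ : Measure X} [IsProbabilityMeasure μ]
    {ρ δ : ℝ≥0} {K : Set X} {r : ℝ} (hμ : IsSelfSimilar f μ)
    (hf : ∀ i x y, edist (f i x) (f i y) = ρ * edist x y) (hρ₀ : ρ ≠ 0) (hρ₁ : ρ < 1)
    (hKc : IsClosed K) (hKb : Bornology.IsBounded K) (hKn : K.Nonempty)
    (hK : ∀ i, MapsTo (f i) K K) (hδ : δ ≠ 0)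
    (hsep : Pairwise fun i j => ∀ x ∈ K, ∀ y ∈ K, δ < edist (f i x) (f j y)) (hr : 0 < r) :
    Tendsto (fun n : ℕ => r * Real.log n / -Real.log (quantizationError r μ n).toReal) atTop
      (𝓝 (Real.log (Fintype.card ι) / -Real.log ρ)) := by
  have hlip (i : ι) : LipschitzWith ρ (f i) := fun x y => (hf i x y).le
  have hanti (i : ι) : AntilipschitzWith ρ⁻¹ (f i) := fun x y => by
    rw [hf, ← mul_assoc, ← ENNReal.coe_mul, inv_mul_cancel₀ hρ₀, ENNReal.coe_one, one_mul]
  have hcard : 1 < Fintype.card ι := Fintype.one_lt_card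
  have hρpos : (0 : ℝ) < ρ := mod_cast hρ₀.bot_lt
  obtain ⟨c₁, c₂, hc₁, hbounds⟩ := hμ.exists_mul_pow_natLog_le_toReal hlip hanti hρ₀ hρ₁.le hr.le
    hKn hKb.ediam_ne_top (hμ.ae_mem_of_mapsTo hlip hρ₀ hρ₁ hKc hKn hK) hδ hsep
  have herr := tendsto_log_div_of_mul_pow_le (tendsto_natLog_atTop hcard) hc₁
    (Real.rpow_pos_of_pos hρpos r)
    ((eventually_ne_atTop 0).mono fun n hn => (hbounds n hn).1)
    ((eventually_ne_atTop 0).mono fun n hn => (hbounds n hn).2)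
  have hlogρ : Real.log ρ < 0 := Real.log_neg hρpos (mod_cast hρ₁)
  rw [Real.log_rpow hρpos] at herr
  rw [← mul_div_mul_left _ _ hr.ne', mul_neg]
  refine (((tendsto_log_div_natLog hcard).const_mul r).div herr.neg
    (neg_ne_zero.2 (mul_neg_of_pos_of_neg hr hlogρ).ne)).congr' ?_
  filter_upwards [(tendsto_natLog_atTop hcard).eventually_gt_atTop 0] with n hn
  rw [Pi.div_apply, ← mul_div_assoc, ← neg_div, div_div_div_cancel_right₀ (by positivity)]

section RMeasure

open Metric Set
open scoped NNReal

lemma isSelfSimilar_Smap {P : Measure E2}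
    (hP : P = (3 : ℝ≥0∞)⁻¹ • (P.map S1 + P.map S2 + P.map S3)) : IsSelfSimilar Smap P := by
  simpa [IsSelfSimilar, Fin.sum_univ_three, Smap] using hP

lemma edist_Smap (i : Fin 3) (x y : E2) :
    edist (Smap i x) (Smap i y) = (3⁻¹ : ℝ≥0) * edist x y := by
  have hsub : Smap i x - Smap i y = (3⁻¹ : ℝ) • (x - y) := by
    fin_cases i <;> simp [Smap, S1, S2, S3, smul_sub]
  rw [edist_eq_enorm_sub, edist_eq_enorm_sub, hsub, enorm_smul]
  simp [enorm_eq_nnnorm]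

lemma dist_Smap (i : Fin 3) (x y : E2) : dist (Smap i x) (Smap i y) = dist x y / 3 := by
  rw [dist_edist, edist_Smap, ENNReal.toReal_mul, ← dist_edist]
  simp [div_eq_inv_mul]

lemma dist_sq_pt (a b c d : ℝ) : dist (pt a b) (pt c d) ^ 2 = (a - c) ^ 2 + (b - d) ^ 2 := by
  rw [EuclideanSpace.dist_eq, Real.sq_sqrt (by positivity)]
  simp [Fin.sum_univ_two, Real.dist_eq, pt]

/-- The centroid of the triangle `Tri`, centre of a disc that the maps `Smap i` carry into pairwise
separated subdiscs. -/
def centroid : E2 := pt (1 / 2) (√3 / 6)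

lemma Smap_centroid (i : Fin 3) :
    Smap i centroid =
      ![pt (1 / 6) (√3 / 18), pt (5 / 6) (√3 / 18), pt (1 / 2) (7 * √3 / 18)] i := by
  fin_cases i <;> ext k <;> fin_cases k <;> simp [Smap, S1, S2, S3, centroid, pt] <;> ring

lemma dist_sq_Smap_centroid_centroid (i : Fin 3) :
    dist (Smap i centroid) centroid ^ 2 = 4 / 27 := by
  have h3 : √3 ^ 2 = 3 := Real.sq_sqrt (by norm_num)
  rw [Smap_centroid, centroid]
  fin_cases i <;> refine (dist_sq_pt _ _ _ _).trans ?_ <;> linarith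

lemma dist_Smap_centroid_Smap_centroid {i j : Fin 3} (hij : i ≠ j) :
    dist (Smap i centroid) (Smap j centroid) = 2 / 3 := by
  have h3 : √3 ^ 2 = 3 := Real.sq_sqrt (by norm_num)
  refine (sq_eq_sq₀ dist_nonneg (by norm_num)).1 ?_
  rw [Smap_centroid, Smap_centroid]
  fin_cases i <;> fin_cases j <;> first
    | exact absurd rfl hij
    | refine (dist_sq_pt _ _ _ _).trans ?_; linarith

lemma mapsTo_Smap_closedBall (i : Fin 3) :
    MapsTo (Smap i) (closedBall centroid (3 / 5)) (closedBall centroid (3 / 5)) := fun x hx => by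
  have hcentre : dist (Smap i centroid) centroid ≤ 2 / 5 :=
    (sq_le_sq₀ dist_nonneg (by norm_num)).1 (by rw [dist_sq_Smap_centroid_centroid]; norm_num)
  have himage := dist_Smap i x centroid
  have htri := dist_triangle (Smap i x) (Smap i centroid) centroid
  rw [mem_closedBall] at hx ⊢
  linarith

lemma pairwise_lt_edist_Smap : Pairwise fun i j : Fin 3 =>
    ∀ x ∈ closedBall centroid (3 / 5), ∀ y ∈ closedBall centroid (3 / 5),
      ((1 / 4 : ℝ≥0) : ℝ≥0∞) < edist (Smap i x) (Smap j y) := fun i j hij x hx y hy => by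
  have hcentres := dist_Smap_centroid_Smap_centroid hij
  have hx' := dist_Smap i centroid x
  have hy' := dist_Smap j y centroid
  have htri := dist_triangle4 (Smap i centroid) (Smap i x) (Smap j y) (Smap j centroid)
  rw [mem_closedBall'] at hx
  rw [mem_closedBall] at hy
  rw [edist_nndist, ENNReal.coe_lt_coe, ← NNReal.coe_lt_coe, coe_nndist]
  push_cast
  linarith

end RMeasure

/-- The quantization dimension of the R-measure P exists and equals one:
lim_{n→∞} (2 log n)/(− log V_n(P)) = 1. -/
theorem stmt_18 (P : Measure E2) [IsProbabilityMeasure P]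
    (hP : P = (3 : ℝ≥0∞)⁻¹ • (P.map S1 + P.map S2 + P.map S3)) :
    Filter.Tendsto
      (fun n : ℕ => (2 * Real.log n) / (- Real.log (quantErr P n).toReal))
      Filter.atTop (nhds 1) := by
  have hdim := stmt_18_general (isSelfSimilar_Smap hP) edist_Smap (by norm_num) (by norm_num)
    Metric.isClosed_closedBall Metric.isBounded_closedBall
    (Metric.nonempty_closedBall.2 (by norm_num)) mapsTo_Smap_closedBall (by norm_num)
    pairwise_lt_edist_Smap two_pos
  simpa [(Real.log_pos (by norm_num : (1 : ℝ) < 3)).ne', quantErr_eq_quantizationError] using hdim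

end
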